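/- Let {A^k}_{k≥0} be a greedy HOOI sequence with a block-nondegenerate limit point Ā. Then there exist constants α > 0 and δ > 0 such that for every k, if ‖A^k − Ā‖_F ≤ δ then α‖A^{k+1} − A^k‖_F² ≤ f(A^{k+1}) − f(A^k). -/

import Mathlib

open Matrix BigOperators Filter

def froSq {ι κ : Type*} [Fintype ι] [Fintype κ] (M : Matrix ι κ ℝ) : ℝ :=
  ∑ i, ∑ j, (M i j) ^ 2

noncomputable def fro {ι κ : Type*} [Fintype ι] [Fintype κ] (M : Matrix ι κ ℝ) : ℝ :=
  Real.sqrt (froSq M)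

noncomputable def eigList {m : ℕ} {κ : Type*} [Fintype κ] (Y : Matrix (Fin m) κ ℝ) : List ℝ :=
  ((((Finset.univ : Finset (Fin m)).val.map
      (fun j => (Matrix.isHermitian_mul_conjTranspose_self Y).eigenvalues j)).sort (· ≤ ·)).reverse)

noncomputable def sval {m : ℕ} {κ : Type*} [Fintype κ] (Y : Matrix (Fin m) κ ℝ) (i : ℕ) : ℝ :=
  Real.sqrt ((eigList Y).getD (i - 1) 0)

/-- Feasibility: every factor matrix has orthonormal columns. -/
def TFeas {N : ℕ} {I r : Fin N → ℕ}
    (A : (n : Fin N) → Matrix (Fin (I n)) (Fin (r n)) ℝ) : Prop :=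
  ∀ n, (A n)ᵀ * A n = 1

/-- `Gₙ(A) = unfoldₙ(X ×₁ A₁ᵀ ⋯ ×_{n−1} A_{n−1}ᵀ ×_{n+1} A_{n+1}ᵀ ⋯ ×_N A_Nᵀ)`. -/
noncomputable def Gmat {N : ℕ} {I r : Fin N → ℕ} (X : ((n : Fin N) → Fin (I n)) → ℝ)
    (A : (n : Fin N) → Matrix (Fin (I n)) (Fin (r n)) ℝ) (n : Fin N) :
    Matrix (Fin (I n)) ((m : {m : Fin N // m ≠ n}) → Fin (r m.1)) ℝ :=
  fun j c => ∑ idx : ((m : {m : Fin N // m ≠ n}) → Fin (I m.1)),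
    X (fun i => if h : i = n then Fin.cast (by rw [h]) j else idx ⟨i, h⟩) *
      ∏ m : {m : Fin N // m ≠ n}, A m.1 (idx m) (c m)

/-- `f(A) = ‖X ×₁ A₁ᵀ ⋯ ×_N A_Nᵀ‖_F²`. -/
noncomputable def fval {N : ℕ} {I r : Fin N → ℕ} (X : ((n : Fin N) → Fin (I n)) → ℝ)
    (A : (n : Fin N) → Matrix (Fin (I n)) (Fin (r n)) ℝ) : ℝ :=
  ∑ c : ((n : Fin N) → Fin (r n)),
    (∑ idx : ((n : Fin N) → Fin (I n)), X idx * ∏ n, A n (idx n) (c n)) ^ 2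

/-- A critical point: `Gₙ(A)Gₙ(A)ᵀAₙ = AₙAₙᵀGₙ(A)Gₙ(A)ᵀAₙ` for all `n`. -/
def Critical {N : ℕ} {I r : Fin N → ℕ} (X : ((n : Fin N) → Fin (I n)) → ℝ)
    (A : (n : Fin N) → Matrix (Fin (I n)) (Fin (r n)) ℝ) : Prop :=
  ∀ n, Gmat X A n * (Gmat X A n)ᵀ * A n =
    A n * (A n)ᵀ * (Gmat X A n * (Gmat X A n)ᵀ * A n)

/-- A block-wise maximizer. -/
def BlockMax {N : ℕ} {I r : Fin N → ℕ} (X : ((n : Fin N) → Fin (I n)) → ℝ)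
    (A : (n : Fin N) → Matrix (Fin (I n)) (Fin (r n)) ℝ) : Prop :=
  ∀ n, ∀ B : Matrix (Fin (I n)) (Fin (r n)) ℝ, Bᵀ * B = 1 →
    froSq (Bᵀ * Gmat X A n) ≤ froSq ((A n)ᵀ * Gmat X A n)

/-- Block-nondegeneracy: `σ_{rₙ}(Gₙ(A)) > σ_{rₙ+1}(Gₙ(A))` for all `n`. -/
def NonDeg {N : ℕ} {I r : Fin N → ℕ} (X : ((n : Fin N) → Fin (I n)) → ℝ)
    (A : (n : Fin N) → Matrix (Fin (I n)) (Fin (r n)) ℝ) : Prop :=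
  ∀ n, sval (Gmat X A n) (r n + 1) < sval (Gmat X A n) (r n)

/-- The hybrid tuple used in HOOI: the already-updated blocks `i < n` come from
`Anew`, the rest from `Aold`. -/
def hyb {N : ℕ} {I r : Fin N → ℕ}
    (Aold Anew : (n : Fin N) → Matrix (Fin (I n)) (Fin (r n)) ℝ) (n : Fin N) :
    (i : Fin N) → Matrix (Fin (I i)) (Fin (r i)) ℝ :=
  fun i => if i < n then Anew i else Aold i

/-- `Gₙ^k = unfoldₙ(X ×₁ (A₁^{k+1})ᵀ ⋯ ×_{n−1} (A_{n−1}^{k+1})ᵀ ×_{n+1} (A_{n+1}^k)ᵀ ⋯ ×_N (A_N^k)ᵀ)`. -/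
noncomputable def Gseq {N : ℕ} {I r : Fin N → ℕ} (X : ((n : Fin N) → Fin (I n)) → ℝ)
    (A : ℕ → (n : Fin N) → Matrix (Fin (I n)) (Fin (r n)) ℝ) (k : ℕ) (n : Fin N) :
    Matrix (Fin (I n)) ((m : {m : Fin N // m ≠ n}) → Fin (r m.1)) ℝ :=
  Gmat X (hyb (A k) (A (k + 1)) n) n

/-- A HOOI sequence. -/
def IsHOOI {N : ℕ} {I r : Fin N → ℕ} (X : ((n : Fin N) → Fin (I n)) → ℝ)
    (A : ℕ → (n : Fin N) → Matrix (Fin (I n)) (Fin (r n)) ℝ) : Prop :=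
  (∀ k, TFeas (A k)) ∧
  ∀ k (n : Fin N), ∀ B : Matrix (Fin (I n)) (Fin (r n)) ℝ, Bᵀ * B = 1 →
    froSq (Bᵀ * Gseq X A k n) ≤ froSq ((A (k + 1) n)ᵀ * Gseq X A k n)

/-- A greedy HOOI sequence. -/
def IsGreedyHOOI {N : ℕ} {I r : Fin N → ℕ} (X : ((n : Fin N) → Fin (I n)) → ℝ)
    (A : ℕ → (n : Fin N) → Matrix (Fin (I n)) (Fin (r n)) ℝ) : Prop :=
  IsHOOI X A ∧
  ∀ k (n : Fin N), ∀ B : Matrix (Fin (I n)) (Fin (r n)) ℝ, Bᵀ * B = 1 →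
    (∀ C : Matrix (Fin (I n)) (Fin (r n)) ℝ, Cᵀ * C = 1 →
      froSq (Cᵀ * Gseq X A k n) ≤ froSq (Bᵀ * Gseq X A k n)) →
    fro (A (k + 1) n - A k n) ≤ fro (B - A k n)

/-- `Ā` is a limit point of the sequence `{A^k}` (blockwise in Frobenius norm). -/
def IsLimitPt {N : ℕ} {I r : Fin N → ℕ}
    (A : ℕ → (n : Fin N) → Matrix (Fin (I n)) (Fin (r n)) ℝ)
    (Abar : (n : Fin N) → Matrix (Fin (I n)) (Fin (r n)) ℝ) : Prop :=
  ∃ φ : ℕ → ℕ, StrictMono φ ∧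
    ∀ n, Tendsto (fun k => fro (A (φ k) n - Abar n)) atTop (nhds 0)

/-- `‖A − B‖_F = √(∑ₙ ‖Aₙ − Bₙ‖_F²)` on tuples. -/
noncomputable def tdist {N : ℕ} {I r : Fin N → ℕ}
    (A B : (n : Fin N) → Matrix (Fin (I n)) (Fin (r n)) ℝ) : ℝ :=
  Real.sqrt (∑ n, froSq (A n - B n))

/-- A local maximizer of `f` over the feasible set. -/
def LocalMax {N : ℕ} {I r : Fin N → ℕ} (X : ((n : Fin N) → Fin (I n)) → ℝ)
    (A : (n : Fin N) → Matrix (Fin (I n)) (Fin (r n)) ℝ) : Prop :=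
  TFeas A ∧ ∃ ε > (0 : ℝ), ∀ B : (n : Fin N) → Matrix (Fin (I n)) (Fin (r n)) ℝ,
    TFeas B → tdist B A ≤ ε → fval X B ≤ fval X A

/-- A globally optimal solution. -/
def GlobalMax {N : ℕ} {I r : Fin N → ℕ} (X : ((n : Fin N) → Fin (I n)) → ℝ)
    (A : (n : Fin N) → Matrix (Fin (I n)) (Fin (r n)) ℝ) : Prop :=
  TFeas A ∧ ∀ B : (n : Fin N) → Matrix (Fin (I n)) (Fin (r n)) ℝ,
    TFeas B → fval X B ≤ fval X A

/-!
For a matrix `Y` and a frame `U` of top `s` left singular vectors, Ky Fan's maximum principle has a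
quantitative form: any `C` with orthonormal columns satisfies
`‖UᵀY‖² - ‖CᵀY‖² ≥ (σₛ² - σₛ₊₁²) (s - ‖UᵀC‖²)`. If `UᵀC = Q diag(d) Wᵀ` is a singular value
decomposition, then `U Q Wᵀ` is again optimal and `‖U Q Wᵀ - C‖² = 2 ∑ (1 - dⱼ) ≤ 2 (s - ‖UᵀC‖²)`,
because `0 ≤ dⱼ ≤ 1`. The greedy choice is at least as close to `C`, so the squared displacement of
a block update, times half the spectral gap, is at most its gain. The gap depends continuously on
`Y`: sums of top eigenvalues of `Y Yᵀ` are suprema of `‖CᵀY‖²` over the compact set of frames.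

Along the iteration `f` increases, and a subsequence of its values tends to `f(Ā)`, so
`f(Aᵏ) ≤ f(Ā)` for all `k`. Hence the total gain of a sweep starting near `Ā` is small, and
block by block the partially updated tuples stay near `Ā`, where the gaps are bounded below.
-/

open scoped Topology

section Frobenius

variable {ι κ σ : Type*} [Fintype ι] [Fintype κ]

lemma froSq_eq_trace (M : Matrix ι κ ℝ) : froSq M = trace (Mᵀ * M) := by
  simp only [froSq, trace, diag_apply, mul_apply, transpose_apply, ← pow_two]
  exact Finset.sum_comm

lemma froSq_transpose (M : Matrix ι κ ℝ) : froSq Mᵀ = froSq M :=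
  Finset.sum_comm

lemma froSq_nonneg (M : Matrix ι κ ℝ) : 0 ≤ froSq M :=
  Finset.sum_nonneg fun _ _ => Finset.sum_nonneg fun _ _ => sq_nonneg _

@[fun_prop]
lemma continuous_froSq : Continuous (froSq : Matrix ι κ ℝ → ℝ) := by
  unfold froSq
  fun_prop

lemma sq_apply_le_froSq (M : Matrix ι κ ℝ) (i : ι) (j : κ) : M i j ^ 2 ≤ froSq M :=
  calc M i j ^ 2 ≤ ∑ j, M i j ^ 2 :=
        Finset.single_le_sum (f := fun j => M i j ^ 2) (fun _ _ => sq_nonneg _) (Finset.mem_univ j)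
    _ ≤ froSq M :=
        Finset.single_le_sum (f := fun i => ∑ j, M i j ^ 2)
          (fun _ _ => Finset.sum_nonneg fun _ _ => sq_nonneg _) (Finset.mem_univ i)

lemma tendsto_of_tendsto_fro_sub {β : Type*} {F : Filter β} {M : β → Matrix ι κ ℝ}
    {L : Matrix ι κ ℝ} (h : Tendsto (fun k => fro (M k - L)) F (𝓝 0)) : Tendsto M F (𝓝 L) := by
  refine tendsto_pi_nhds.2 fun i => tendsto_pi_nhds.2 fun j => ?_
  rw [tendsto_iff_norm_sub_tendsto_zero]
  exact squeeze_zero (fun _ => norm_nonneg _)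
    (fun k => Real.abs_le_sqrt (sq_apply_le_froSq (M k - L) i j)) h

lemma froSq_transpose_mul (C : Matrix ι σ ℝ) (Y : Matrix ι κ ℝ) [Fintype σ] :
    froSq (Cᵀ * Y) = trace (Cᵀ * (Y * Yᵀ) * C) := by
  rw [froSq_eq_trace, trace_mul_comm]
  simp only [transpose_mul, transpose_transpose, Matrix.mul_assoc]

end Frobenius

section Stiefel

variable {ι κ σ τ : Type*} [Fintype ι] [DecidableEq σ]

/-- The set `O_{ι×σ}` of matrices with orthonormal columns, over which each HOOI block update
optimizes; for `ι = σ` it is the orthogonal group. -/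
def stiefel (ι σ : Type*) [Fintype ι] [DecidableEq σ] : Set (Matrix ι σ ℝ) :=
  {Z | Zᵀ * Z = 1}

lemma mul_mem_stiefel [Fintype σ] [DecidableEq τ] {U : Matrix ι σ ℝ} {O : Matrix σ τ ℝ}
    (hU : U ∈ stiefel ι σ) (hO : O ∈ stiefel σ τ) : U * O ∈ stiefel ι τ :=
  calc (U * O)ᵀ * (U * O) = Oᵀ * (Uᵀ * U) * O := by simp only [transpose_mul, Matrix.mul_assoc]
    _ = 1 := by rw [hU.out, Matrix.mul_one, hO.out]

lemma mul_transpose_self_of_mem_stiefel [Fintype σ] {O : Matrix σ σ ℝ} (hO : O ∈ stiefel σ σ) :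
    O * Oᵀ = 1 :=
  mul_eq_one_comm.1 hO.out

lemma transpose_mem_stiefel [Fintype σ] {O : Matrix σ σ ℝ} (hO : O ∈ stiefel σ σ) :
    Oᵀ ∈ stiefel σ σ :=
  mul_transpose_self_of_mem_stiefel hO

lemma submatrix_mem_stiefel [DecidableEq τ] {W : Matrix ι σ ℝ} (hW : W ∈ stiefel ι σ)
    {e : τ → σ} (he : Function.Injective e) : W.submatrix id e ∈ stiefel ι τ :=
  calc (W.submatrix id e)ᵀ * W.submatrix id e = (Wᵀ * W).submatrix e e := rfl
    _ = 1 := by rw [hW.out, submatrix_one e he]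

lemma froSq_mul_of_mem_stiefel [Fintype κ] [Fintype σ] {U : Matrix ι σ ℝ} (hU : U ∈ stiefel ι σ)
    (M : Matrix σ κ ℝ) : froSq (U * M) = froSq M := by
  rw [froSq_eq_trace, froSq_eq_trace, transpose_mul, Matrix.mul_assoc, ← Matrix.mul_assoc Uᵀ,
    hU.out, Matrix.one_mul]

lemma froSq_of_mem_stiefel [Fintype σ] {U : Matrix ι σ ℝ} (hU : U ∈ stiefel ι σ) :
    froSq U = Fintype.card σ := by
  rw [froSq_eq_trace, hU.out, trace_one]

lemma sum_sq_transpose_mul_le [Fintype σ] {U : Matrix ι σ ℝ} (hU : U ∈ stiefel ι σ)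
    (M : Matrix ι κ ℝ) (j : κ) : ∑ c, (Uᵀ * M) c j ^ 2 ≤ ∑ i, M i j ^ 2 := by
  set P := Uᵀ * M with hP
  have residual : (M - U * P)ᵀ * (M - U * P) = Mᵀ * M - Pᵀ * P := by
    have hMU : Mᵀ * (U * P) = Pᵀ * P := by simp [hP, Matrix.mul_assoc]
    have hUM : (U * P)ᵀ * M = Pᵀ * P := by rw [transpose_mul, Matrix.mul_assoc]
    have hUU : (U * P)ᵀ * (U * P) = Pᵀ * P := by
      rw [transpose_mul, Matrix.mul_assoc, ← Matrix.mul_assoc Uᵀ, hU.out, Matrix.one_mul]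
    rw [transpose_sub, Matrix.sub_mul, Matrix.mul_sub, Matrix.mul_sub, hMU, hUM, hUU]
    abel
  have entry := congrFun (congrFun residual j) j
  simp only [Matrix.sub_apply, mul_apply, transpose_apply, ← pow_two] at entry
  rw [← sub_nonneg, ← entry]
  exact Finset.sum_nonneg fun _ _ => sq_nonneg _

lemma froSq_transpose_mul_le [Fintype κ] [Fintype σ] {U : Matrix ι σ ℝ} (hU : U ∈ stiefel ι σ)
    (M : Matrix ι κ ℝ) : froSq (Uᵀ * M) ≤ froSq M := by
  unfold froSq
  rw [Finset.sum_comm, Finset.sum_comm (s := Finset.univ (α := ι))]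
  exact Finset.sum_le_sum fun j _ => sum_sq_transpose_mul_le hU M j

lemma sum_sq_row_le_one [Fintype σ] {U : Matrix ι σ ℝ} (hU : U ∈ stiefel ι σ) (i : ι) :
    ∑ c, U i c ^ 2 ≤ 1 := by
  classical
  simpa [Matrix.one_apply] using sum_sq_transpose_mul_le hU (1 : Matrix ι ι ℝ) i

lemma sum_sq_col_of_mem_stiefel {U : Matrix ι σ ℝ} (hU : U ∈ stiefel ι σ) (c : σ) :
    ∑ i, U i c ^ 2 = 1 := by
  simpa [mul_apply, ← pow_two] using congrFun (congrFun hU.out c) c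

lemma isCompact_stiefel : IsCompact (stiefel ι σ) := by
  have hcube : IsCompact
      (Set.univ.pi fun _ => Set.univ.pi fun _ => Set.Icc (-1) 1 : Set (ι → σ → ℝ)) :=
    isCompact_univ_pi fun _ => isCompact_univ_pi fun _ => isCompact_Icc
  refine hcube.of_isClosed_subset (isClosed_eq (by fun_prop) continuous_const) ?_
  intro U hU i _ c _
  refine abs_le.1 ((sq_le_one_iff_abs_le_one _).1 ?_)
  rw [← sum_sq_col_of_mem_stiefel hU c]
  exact Finset.single_le_sum (f := fun i => U i c ^ 2) (fun _ _ => sq_nonneg _) (Finset.mem_univ i)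

lemma froSq_sub_of_mem_stiefel [Fintype σ] {U C : Matrix ι σ ℝ} (hU : U ∈ stiefel ι σ)
    (hC : C ∈ stiefel ι σ) : froSq (U - C) = 2 * (Fintype.card σ - trace (Uᵀ * C)) := by
  have hCU : trace (Cᵀ * U) = trace (Uᵀ * C) := by
    rw [← trace_transpose, transpose_mul, transpose_transpose]
  rw [froSq_eq_trace, transpose_sub, Matrix.sub_mul, Matrix.mul_sub, Matrix.mul_sub, hU.out, hC.out]
  simp only [trace_sub, trace_one, hCU]
  ring

end Stiefel

section SingularValueDecomposition

variable {ι : Type*} [Fintype ι] [DecidableEq ι]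

lemma eigenvectorUnitary_mem_stiefel {S : Matrix ι ι ℝ} (hS : S.IsHermitian) :
    (hS.eigenvectorUnitary : Matrix ι ι ℝ) ∈ stiefel ι ι := by
  have h := Unitary.coe_star_mul_self hS.eigenvectorUnitary
  rwa [star_eq_conjTranspose, conjTranspose_eq_transpose_of_trivial] at h

lemma transpose_mul_mul_eq_diagonal_eigenvalues {S : Matrix ι ι ℝ} (hS : S.IsHermitian) :
    (hS.eigenvectorUnitary : Matrix ι ι ℝ)ᵀ * S * hS.eigenvectorUnitary =
      diagonal hS.eigenvalues := by
  have h := hS.conjStarAlgAut_star_eigenvectorUnitary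
  rwa [Unitary.conjStarAlgAut_star_apply, star_eq_conjTranspose,
    conjTranspose_eq_transpose_of_trivial] at h

lemma exists_stiefel_forall_eq_of_dotProduct {v : ι → ι → ℝ} {S : Set ι}
    (hv : ∀ i ∈ S, ∀ j ∈ S, v i ⬝ᵥ v j = if i = j then 1 else 0) :
    ∃ Q ∈ stiefel ι ι, ∀ j ∈ S, Q.col j = v j := by
  let u : ι → EuclideanSpace ℝ ι := fun j => WithLp.toLp 2 (v j)
  have hu : Orthonormal ℝ (S.domRestrict u) := by
    rw [orthonormal_iff_ite]
    rintro ⟨i, hi⟩ ⟨j, hj⟩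
    simpa [u, EuclideanSpace.inner_toLp_toLp, dotProduct_comm] using hv i hi j hj
  obtain ⟨b, hb⟩ := hu.exists_orthonormalBasis_extension_of_card_eq (by simp)
  refine ⟨of fun i j => b j i, ?_, fun j hj => ?_⟩
  · ext i j
    simpa [mul_apply, PiLp.inner_apply, mul_comm, one_apply]
      using orthonormal_iff_ite.1 b.orthonormal i j
  · ext i
    simp [hb j hj, u]

lemma exists_eq_mul_diagonal_sqrt {D : Matrix ι ι ℝ} {l : ι → ℝ} (hD : Dᵀ * D = diagonal l) :
    ∃ Q ∈ stiefel ι ι, D = Q * diagonal fun j => √(l j) := by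
  have hdot : ∀ i j, D.col i ⬝ᵥ D.col j = if i = j then l i else 0 := fun i j => by
    rw [← diagonal_apply, ← hD]
    rfl
  have hl : ∀ j, 0 ≤ l j := fun j => by
    rw [← (hdot j j).trans (if_pos rfl)]
    exact Finset.sum_nonneg fun i _ => mul_self_nonneg (D i j)
  obtain ⟨Q, hQ, hQD⟩ := exists_stiefel_forall_eq_of_dotProduct (S := {j | l j ≠ 0})
    (v := fun j => (√(l j))⁻¹ • D.col j) fun i hi j _ => by
      rw [smul_dotProduct, dotProduct_smul, hdot]
      split_ifs with hij
      · subst hij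
        have : √(l i) ≠ 0 := (Real.sqrt_ne_zero (hl i)).2 hi
        simp only [smul_eq_mul]
        field_simp
        exact (Real.sq_sqrt (hl i)).symm
      · simp
  refine ⟨Q, hQ, ?_⟩
  ext i j
  rw [mul_diagonal]
  by_cases hj : l j = 0
  · have hcol : D.col j = 0 := dotProduct_self_eq_zero.1 (by rw [hdot, if_pos rfl, hj])
    simpa [hj] using congrFun hcol i
  · have hQij : Q i j = (√(l j))⁻¹ * D i j := congrFun (hQD j hj) i
    have : √(l j) ≠ 0 := (Real.sqrt_ne_zero (hl j)).2 hj
    rw [hQij]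
    field_simp

lemma exists_singularValueDecomposition (K : Matrix ι ι ℝ) :
    ∃ Q ∈ stiefel ι ι, ∃ W ∈ stiefel ι ι, ∃ d : ι → ℝ,
      (∀ j, 0 ≤ d j) ∧ K = Q * diagonal d * Wᵀ := by
  have hS : (Kᵀ * K).IsHermitian := isHermitian_conjTranspose_mul_self K
  set W := (hS.eigenvectorUnitary : Matrix ι ι ℝ)
  have hW : W ∈ stiefel ι ι := eigenvectorUnitary_mem_stiefel hS
  have hgram : (K * W)ᵀ * (K * W) = diagonal hS.eigenvalues :=
    calc (K * W)ᵀ * (K * W) = Wᵀ * (Kᵀ * K) * W := by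
          simp only [transpose_mul, Matrix.mul_assoc]
      _ = diagonal hS.eigenvalues := transpose_mul_mul_eq_diagonal_eigenvalues hS
  obtain ⟨Q, hQ, hKW⟩ := exists_eq_mul_diagonal_sqrt hgram
  refine ⟨Q, hQ, W, hW, fun j => √(hS.eigenvalues j), fun _ => Real.sqrt_nonneg _, ?_⟩
  rw [← hKW, Matrix.mul_assoc, mul_transpose_self_of_mem_stiefel hW, Matrix.mul_one]

lemma exists_stiefel_froSq_mul_sub_le {κ : Type*} [Fintype κ] {U C : Matrix κ ι ℝ}
    (hU : U ∈ stiefel κ ι) (hC : C ∈ stiefel κ ι) :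
    ∃ O ∈ stiefel ι ι, froSq (U * O - C) ≤ 2 * (Fintype.card ι - froSq (Uᵀ * C)) := by
  obtain ⟨Q, hQ, W, hW, d, hd, hsvd⟩ := exists_singularValueDecomposition (Uᵀ * C)
  have hO : Q * Wᵀ ∈ stiefel ι ι := mul_mem_stiefel hQ (transpose_mem_stiefel hW)
  refine ⟨Q * Wᵀ, hO, ?_⟩
  have hd_le : ∀ j, d j ≤ 1 := fun j => by
    have hcol : Uᵀ * (C * W) = Q * diagonal d := by
      rw [← Matrix.mul_assoc, hsvd, Matrix.mul_assoc, hW.out, Matrix.mul_one]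
    have hbessel := sum_sq_transpose_mul_le hU (C * W) j
    rw [hcol, sum_sq_col_of_mem_stiefel (mul_mem_stiefel hC hW)] at hbessel
    simp only [mul_diagonal, mul_pow, ← Finset.sum_mul, sum_sq_col_of_mem_stiefel hQ,
      one_mul] at hbessel
    exact (sq_le_one_iff₀ (hd j)).1 hbessel
  have htrace : trace ((U * (Q * Wᵀ))ᵀ * C) = ∑ j, d j :=
    calc trace ((U * (Q * Wᵀ))ᵀ * C) = trace (W * (Qᵀ * (Uᵀ * C))) := by
          simp only [transpose_mul, transpose_transpose, Matrix.mul_assoc]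
      _ = trace (W * ((Qᵀ * Q) * diagonal d * Wᵀ)) := by rw [hsvd]; simp only [Matrix.mul_assoc]
      _ = trace (diagonal d * (Wᵀ * W)) := by
          rw [hQ.out, Matrix.one_mul, trace_mul_comm, Matrix.mul_assoc]
      _ = ∑ j, d j := by rw [hW.out, Matrix.mul_one, trace_diagonal]
  have henergy : froSq (Uᵀ * C) = ∑ j, d j ^ 2 := by
    rw [hsvd, Matrix.mul_assoc, froSq_mul_of_mem_stiefel hQ, ← froSq_transpose, transpose_mul,
      transpose_transpose, froSq_mul_of_mem_stiefel hW, froSq_transpose]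
    simp [froSq, diagonal_apply, ite_pow]
  rw [froSq_sub_of_mem_stiefel (mul_mem_stiefel hU hO) hC, htrace, henergy]
  have : ∑ j, d j ^ 2 ≤ ∑ j, d j :=
    Finset.sum_le_sum fun j _ => pow_le_of_le_one (hd j) (hd_le j) two_ne_zero
  linarith

end SingularValueDecomposition

section KyFan

variable {m s : ℕ} {κ : Type*} [Fintype κ]

/-- The `i`-th largest eigenvalue of `Y Yᵀ`, counted from `0` and set to `0` for `i ≥ m`, so that
`sval Y (i + 1) = √(sortedEigenvalue Y i)`. -/
noncomputable def sortedEigenvalue (Y : Matrix (Fin m) κ ℝ) (i : ℕ) : ℝ :=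
  (eigList Y).getD i 0

lemma exists_perm_eigList_eq_ofFn (Y : Matrix (Fin m) κ ℝ) :
    ∃ e : Equiv.Perm (Fin m),
      Antitone ((isHermitian_mul_conjTranspose_self Y).eigenvalues ∘ e) ∧
      eigList Y = List.ofFn ((isHermitian_mul_conjTranspose_self Y).eigenvalues ∘ e) := by
  set ev := (isHermitian_mul_conjTranspose_self Y).eigenvalues with hev
  let e : Equiv.Perm (Fin m) := Tuple.sort (-ev)
  have hanti : Antitone (ev ∘ e) := fun i j hij =>
    neg_le_neg_iff.1 (Tuple.monotone_sort (-ev) hij)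
  refine ⟨e, hanti, List.Perm.eq_of_sortedGE ?_ hanti.sortedGE_ofFn ?_⟩
  · exact List.sortedGE_reverse.2 (Multiset.pairwise_sort _ (· ≤ ·)).sortedLE
  · refine (List.reverse_perm _).trans ?_
    rw [← Multiset.coe_eq_coe, Multiset.sort_eq, Fin.univ_val_map, Multiset.coe_eq_coe, ← hev]
    exact (Equiv.Perm.ofFn_comp_perm e ev).symm

lemma sortedEigenvalue_of_le (Y : Matrix (Fin m) κ ℝ) {i : ℕ} (hi : m ≤ i) :
    sortedEigenvalue Y i = 0 := by
  obtain ⟨e, -, he⟩ := exists_perm_eigList_eq_ofFn Y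
  rw [sortedEigenvalue, he, List.getD_eq_default]
  simpa only [List.length_ofFn] using hi

lemma antitone_sortedEigenvalue (Y : Matrix (Fin m) κ ℝ) : Antitone (sortedEigenvalue Y) := by
  obtain ⟨e, hanti, he⟩ := exists_perm_eigList_eq_ofFn Y
  have hval : ∀ (i : ℕ) (hi : i < m), sortedEigenvalue Y i =
      (isHermitian_mul_conjTranspose_self Y).eigenvalues (e ⟨i, hi⟩) := fun i hi => by
    simp [sortedEigenvalue, he, hi]
  have hnonneg : ∀ i, 0 ≤ sortedEigenvalue Y i := fun i => by
    rcases lt_or_ge i m with hi | hi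
    · rw [hval i hi]
      exact (posSemidef_self_mul_conjTranspose Y).eigenvalues_nonneg _
    · exact (sortedEigenvalue_of_le Y hi).ge
  intro i j hij
  rcases lt_or_ge j m with hj | hj
  · rw [hval i (hij.trans_lt hj), hval j hj]
    exact hanti (Fin.mk_le_mk.2 hij)
  · exact (sortedEigenvalue_of_le Y hj).trans_le (hnonneg i)

lemma exists_stiefel_mul_eq_diagonal_sortedEigenvalue (Y : Matrix (Fin m) κ ℝ) :
    ∃ W ∈ stiefel (Fin m) (Fin m),
      Wᵀ * (Y * Yᵀ) * W = diagonal fun j : Fin m => sortedEigenvalue Y j := by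
  obtain ⟨e, -, he⟩ := exists_perm_eigList_eq_ofFn Y
  have hS := isHermitian_mul_conjTranspose_self Y
  set V := (hS.eigenvectorUnitary : Matrix (Fin m) (Fin m) ℝ)
  refine ⟨V.submatrix id e,
    submatrix_mem_stiefel (eigenvectorUnitary_mem_stiefel hS) e.injective, ?_⟩
  calc (V.submatrix id e)ᵀ * (Y * Yᵀ) * V.submatrix id e
      = (Vᵀ * (Y * Yᴴ) * V).submatrix e e := rfl
    _ = (diagonal hS.eigenvalues).submatrix e e := by
        rw [transpose_mul_mul_eq_diagonal_eigenvalues hS]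
    _ = diagonal fun j : Fin m => sortedEigenvalue Y j := by
        rw [submatrix_diagonal_equiv]
        simp [sortedEigenvalue, he, Function.comp_def]

lemma froSq_transpose_mul_eq_sum_of_eq_diagonal {ι σ : Type*} [Fintype ι] [DecidableEq ι]
    [Fintype σ] {Y : Matrix ι κ ℝ} {W : Matrix ι ι ℝ} {l : ι → ℝ} (hW : W ∈ stiefel ι ι)
    (hdiag : Wᵀ * (Y * Yᵀ) * W = diagonal l) (C : Matrix ι σ ℝ) :
    froSq (Cᵀ * Y) = ∑ j, l j * ∑ c, (Wᵀ * C) j c ^ 2 := by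
  have hconj : Cᵀ * (Y * Yᵀ) * C = (Wᵀ * C)ᵀ * diagonal l * (Wᵀ * C) := by
    have hWW := mul_transpose_self_of_mem_stiefel hW
    calc Cᵀ * (Y * Yᵀ) * C = Cᵀ * (W * Wᵀ) * (Y * Yᵀ) * (W * Wᵀ) * C := by
          simp only [hWW, Matrix.mul_one]
      _ = _ := by
          rw [← hdiag]
          simp only [transpose_mul, transpose_transpose, Matrix.mul_assoc]
  rw [froSq_transpose_mul, hconj, Matrix.mul_assoc, trace_mul_comm, Matrix.mul_assoc]
  simp only [trace, diag_apply, diagonal_mul, mul_apply (M := Wᵀ * C), transpose_apply (Wᵀ * C),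
    pow_two]

lemma sum_mul_add_gap_le (hs : s ≤ m) {l : ℕ → ℝ} (hl : Antitone l) {w : Fin m → ℝ}
    (hw_nonneg : ∀ j, 0 ≤ w j) (hw_le : ∀ j, w j ≤ 1) (hw_sum : ∑ j, w j = s) :
    ∑ j : Fin m, l j * w j + (l (s - 1) - l s) * (s - ∑ i : Fin s, w (Fin.castLE hs i)) ≤
      ∑ i ∈ Finset.range s, l i := by
  obtain ⟨t, rfl⟩ := Nat.exists_eq_add_of_le hs
  rw [Fin.sum_univ_add] at hw_sum ⊢
  change ∑ i : Fin s, l i * w (Fin.castAdd t i) + ∑ i : Fin t, l (s + i) * w (Fin.natAdd s i) +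
    (l (s - 1) - l s) * (s - ∑ i : Fin s, w (Fin.castAdd t i)) ≤ _
  have head : l (s - 1) * (s - ∑ i : Fin s, w (Fin.castAdd t i)) ≤
      ∑ i ∈ Finset.range s, l i - ∑ i : Fin s, l i * w (Fin.castAdd t i) :=
    calc l (s - 1) * (s - ∑ i : Fin s, w (Fin.castAdd t i))
        = ∑ i : Fin s, l (s - 1) * (1 - w (Fin.castAdd t i)) := by
          simp [← Finset.mul_sum]
      _ ≤ ∑ i : Fin s, l i * (1 - w (Fin.castAdd t i)) :=
          Finset.sum_le_sum fun i _ => mul_le_mul_of_nonneg_right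
            (hl (Nat.le_sub_one_of_lt i.isLt)) (sub_nonneg.2 (hw_le _))
      _ = _ := by simp only [mul_sub, mul_one, Finset.sum_sub_distrib, Finset.sum_range]
  have tail : ∑ i : Fin t, l (s + i) * w (Fin.natAdd s i) ≤
      l s * ∑ i : Fin t, w (Fin.natAdd s i) := by
    rw [Finset.mul_sum]
    exact Finset.sum_le_sum fun i _ =>
      mul_le_mul_of_nonneg_right (hl (Nat.le_add_right s i)) (hw_nonneg _)
  rw [← eq_sub_iff_add_eq'] at hw_sum
  rw [hw_sum] at tail
  linarith

/-- A frame on which Ky Fan's maximum principle is attained: `B` maximizes `‖BᵀY‖²` over the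
matrices of its size with orthonormal columns. This is the condition on a HOOI block update. -/
def IsTopFrame (Y : Matrix (Fin m) κ ℝ) (B : Matrix (Fin m) (Fin s) ℝ) : Prop :=
  B ∈ stiefel (Fin m) (Fin s) ∧
    ∀ C ∈ stiefel (Fin m) (Fin s), froSq (Cᵀ * Y) ≤ froSq (Bᵀ * Y)

/-- The gap `σₛ(Y)² - σₛ₊₁(Y)²`. For `s = 0` the truncated subtraction makes it `0`. -/
noncomputable def spectralGap (Y : Matrix (Fin m) κ ℝ) (s : ℕ) : ℝ :=
  sortedEigenvalue Y (s - 1) - sortedEigenvalue Y s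

lemma spectralGap_nonneg (Y : Matrix (Fin m) κ ℝ) (s : ℕ) : 0 ≤ spectralGap Y s :=
  sub_nonneg.2 (antitone_sortedEigenvalue Y (Nat.sub_le s 1))

lemma spectralGap_pos_of_sval_lt {Y : Matrix (Fin m) κ ℝ} (h : sval Y (s + 1) < sval Y s) :
    0 < spectralGap Y s :=
  sub_pos.2 (lt_of_not_ge fun hle => h.not_ge (Real.sqrt_le_sqrt hle))

lemma exists_isTopFrame_froSq_add_gap_le (hs : s ≤ m) (Y : Matrix (Fin m) κ ℝ) :
    ∃ U : Matrix (Fin m) (Fin s) ℝ, IsTopFrame Y U ∧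
      froSq (Uᵀ * Y) = ∑ i ∈ Finset.range s, sortedEigenvalue Y i ∧
      ∀ C ∈ stiefel (Fin m) (Fin s),
        froSq (Cᵀ * Y) + spectralGap Y s * (s - froSq (Uᵀ * C)) ≤ froSq (Uᵀ * Y) := by
  obtain ⟨W, hW, hdiag⟩ := exists_stiefel_mul_eq_diagonal_sortedEigenvalue Y
  set U := W.submatrix id (Fin.castLE hs)
  have hU : U ∈ stiefel (Fin m) (Fin s) := submatrix_mem_stiefel hW (Fin.castLE_injective hs)
  have hvalue : froSq (Uᵀ * Y) = ∑ i ∈ Finset.range s, sortedEigenvalue Y i := by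
    have hsub : Uᵀ * (Y * Yᵀ) * U =
      (Wᵀ * (Y * Yᵀ) * W).submatrix (Fin.castLE hs) (Fin.castLE hs) := rfl
    rw [froSq_transpose_mul, hsub, hdiag, Finset.sum_range]
    simp [trace]
  have hgap : ∀ C ∈ stiefel (Fin m) (Fin s),
      froSq (Cᵀ * Y) + spectralGap Y s * (s - froSq (Uᵀ * C)) ≤ froSq (Uᵀ * Y) := fun C hC => by
    have hZ : Wᵀ * C ∈ stiefel (Fin m) (Fin s) := mul_mem_stiefel (transpose_mem_stiefel hW) hC
    rw [hvalue, froSq_transpose_mul_eq_sum_of_eq_diagonal hW hdiag]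
    exact sum_mul_add_gap_le hs (antitone_sortedEigenvalue Y)
      (fun j => Finset.sum_nonneg fun c _ => sq_nonneg _) (sum_sq_row_le_one hZ)
      ((froSq_of_mem_stiefel hZ).trans (by rw [Fintype.card_fin]))
  refine ⟨U, ⟨hU, fun C hC => ?_⟩, hvalue, hgap⟩
  have hcard : froSq (Uᵀ * C) ≤ s :=
    (froSq_transpose_mul_le hU C).trans_eq (by rw [froSq_of_mem_stiefel hC, Fintype.card_fin])
  exact (le_add_of_nonneg_right
    (mul_nonneg (spectralGap_nonneg Y s) (sub_nonneg.2 hcard))).trans (hgap C hC)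

lemma sSup_froSq_transpose_mul_eq (hs : s ≤ m) (Y : Matrix (Fin m) κ ℝ) :
    sSup ((fun C => froSq (Cᵀ * Y)) '' stiefel (Fin m) (Fin s)) =
      ∑ i ∈ Finset.range s, sortedEigenvalue Y i := by
  obtain ⟨U, ⟨hU, hmax⟩, hvalue, -⟩ := exists_isTopFrame_froSq_add_gap_le hs Y
  refine IsGreatest.csSup_eq ⟨⟨U, hU, hvalue⟩, ?_⟩
  rintro _ ⟨C, hC, rfl⟩
  exact (hmax C hC).trans_eq hvalue

lemma continuous_sum_sortedEigenvalue (hs : s ≤ m) :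
    Continuous fun Y : Matrix (Fin m) κ ℝ => ∑ i ∈ Finset.range s, sortedEigenvalue Y i := by
  simp only [← sSup_froSq_transpose_mul_eq (κ := κ) hs]
  have hf : Continuous fun p : Matrix (Fin m) κ ℝ × Matrix (Fin m) (Fin s) ℝ =>
      froSq (p.2ᵀ * p.1) := by fun_prop
  exact isCompact_stiefel.continuous_sSup (f := fun Y C => froSq (Cᵀ * Y)) hf

lemma continuous_sortedEigenvalue (i : ℕ) :
    Continuous fun Y : Matrix (Fin m) κ ℝ => sortedEigenvalue Y i := by
  rcases lt_or_ge i m with hi | hi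
  · have hsum := fun s (hs : s ≤ m) => continuous_sum_sortedEigenvalue (κ := κ) hs
    exact ((hsum (i + 1) hi).sub (hsum i hi.le)).congr fun _ => Finset.sum_range_succ_sub_sum _
  · simpa only [sortedEigenvalue_of_le _ hi] using continuous_const

lemma continuous_spectralGap (s : ℕ) :
    Continuous fun Y : Matrix (Fin m) κ ℝ => spectralGap Y s :=
  (continuous_sortedEigenvalue _).sub (continuous_sortedEigenvalue _)

lemma IsTopFrame.spectralGap_mul_froSq_sub_le (hs : s ≤ m) {Y : Matrix (Fin m) κ ℝ}
    {B C : Matrix (Fin m) (Fin s) ℝ} (hB : IsTopFrame Y B) (hC : C ∈ stiefel (Fin m) (Fin s))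
    (hnearest : ∀ B', IsTopFrame Y B' → fro (B - C) ≤ fro (B' - C)) :
    spectralGap Y s / 2 * froSq (B - C) ≤ froSq (Bᵀ * Y) - froSq (Cᵀ * Y) := by
  obtain ⟨U, hU, -, hgap⟩ := exists_isTopFrame_froSq_add_gap_le hs Y
  obtain ⟨O, hO, hnear⟩ := exists_stiefel_froSq_mul_sub_le hU.1 hC
  have hUO : IsTopFrame Y (U * O) := by
    refine ⟨mul_mem_stiefel hU.1 hO, fun C hC => (hU.2 C hC).trans_eq ?_⟩
    rw [transpose_mul, Matrix.mul_assoc, froSq_mul_of_mem_stiefel (transpose_mem_stiefel hO)]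
  have hdist : froSq (B - C) ≤ 2 * (s - froSq (Uᵀ * C)) := by
    rw [Fintype.card_fin] at hnear
    exact ((Real.sqrt_le_sqrt_iff (froSq_nonneg _)).1 (hnearest _ hUO)).trans hnear
  calc spectralGap Y s / 2 * froSq (B - C)
      ≤ spectralGap Y s / 2 * (2 * (s - froSq (Uᵀ * C))) :=
        mul_le_mul_of_nonneg_left hdist (div_nonneg (spectralGap_nonneg Y s) zero_le_two)
    _ = spectralGap Y s * (s - froSq (Uᵀ * C)) := by ring
    _ ≤ froSq (Bᵀ * Y) - froSq (Cᵀ * Y) := by linarith [hgap C hC, hB.2 U hU.1]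

end KyFan

section Tensor

variable {N : ℕ} {I r : Fin N → ℕ}

/-- Tuples `(A₁, …, A_N)` of factor matrices, `Aₙ` of size `I n × r n`. -/
abbrev FactorTuple (I r : Fin N → ℕ) : Type :=
  (n : Fin N) → Matrix (Fin (I n)) (Fin (r n)) ℝ

lemma sum_pi_eq_sum_sum_ne (n : Fin N) (F : ((i : Fin N) → Fin (I i)) → ℝ) :
    ∑ idx, F idx = ∑ j : Fin (I n), ∑ idx : ((m : {m : Fin N // m ≠ n}) → Fin (I m.1)),
      F fun i => if h : i = n then Fin.cast (by rw [h]) j else idx ⟨i, h⟩ := by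
  rw [← Equiv.sum_comp (Equiv.piSplitAt n fun i => Fin (I i)).symm F, Fintype.sum_prod_type]
  refine Finset.sum_congr rfl fun j _ => Finset.sum_congr rfl fun idx _ => congrArg F ?_
  funext i
  by_cases h : i = n
  · subst h
    simp [Equiv.piSplitAt]
  · simp [Equiv.piSplitAt, h]

lemma fval_eq_froSq (X : ((n : Fin N) → Fin (I n)) → ℝ) (A : FactorTuple I r) (n : Fin N) :
    fval X A = froSq ((A n)ᵀ * Gmat X A n) := by
  unfold fval froSq
  rw [sum_pi_eq_sum_sum_ne (I := r) n]
  refine Finset.sum_congr rfl fun j _ => Finset.sum_congr rfl fun c _ => congrArg (· ^ 2) ?_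
  rw [sum_pi_eq_sum_sum_ne (I := I) n, mul_apply]
  refine Finset.sum_congr rfl fun a _ => ?_
  rw [Gmat, Finset.mul_sum]
  refine Finset.sum_congr rfl fun idx _ => ?_
  rw [Fintype.prod_eq_mul_prod_subtype_ne _ n]
  have hprod : ∏ i : {i : Fin N // i ≠ n}, A i.1
      (if h : i.1 = n then Fin.cast (by rw [h]) a else idx ⟨i.1, h⟩)
      (if h : i.1 = n then Fin.cast (by rw [h]) j else c ⟨i.1, h⟩) =
      ∏ m : {m : Fin N // m ≠ n}, A m.1 (idx m) (c m) :=
    Finset.prod_congr rfl fun i _ => by simp only [dif_neg i.2]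
  rw [hprod]
  simp only [dite_true, Fin.cast_eq_self, transpose_apply]
  ring

lemma Gmat_update (X : ((n : Fin N) → Fin (I n)) → ℝ) (A : FactorTuple I r) (n : Fin N)
    (B : Matrix (Fin (I n)) (Fin (r n)) ℝ) :
    Gmat X (Function.update A n B) n = Gmat X A n := by
  funext j c
  refine Finset.sum_congr rfl fun idx _ => congrArg _ (Finset.prod_congr rfl fun m _ => ?_)
  rw [Function.update_of_ne m.2]

lemma fval_update (X : ((n : Fin N) → Fin (I n)) → ℝ) (A : FactorTuple I r) (n : Fin N)
    (B : Matrix (Fin (I n)) (Fin (r n)) ℝ) :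
    fval X (Function.update A n B) = froSq (Bᵀ * Gmat X A n) := by
  rw [fval_eq_froSq X _ n, Gmat_update, Function.update_self]

lemma continuous_Gmat (X : ((n : Fin N) → Fin (I n)) → ℝ) (n : Fin N) :
    Continuous fun A : FactorTuple I r => Gmat X A n := by
  refine continuous_matrix fun j c => ?_
  unfold Gmat
  fun_prop

lemma continuous_fval (X : ((n : Fin N) → Fin (I n)) → ℝ) :
    Continuous fun A : FactorTuple I r => fval X A := by
  unfold fval
  fun_prop

/-- The increase of the objective when the sweep from `A` to `B` replaces block `n`. -/
noncomputable def blockGain (X : ((n : Fin N) → Fin (I n)) → ℝ) (A B : FactorTuple I r)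
    (n : Fin N) : ℝ :=
  froSq ((B n)ᵀ * Gmat X (hyb A B n) n) - froSq ((A n)ᵀ * Gmat X (hyb A B n) n)

lemma sum_blockGain (X : ((n : Fin N) → Fin (I n)) → ℝ) (A B : FactorTuple I r) :
    ∑ n, blockGain X A B n = fval X B - fval X A := by
  let partialSweep : ℕ → FactorTuple I r := fun j i => if i.val < j then B i else A i
  have hfirst : partialSweep 0 = A := by simp [partialSweep]
  have hlast : partialSweep N = B := by simp [partialSweep]
  have hhyb : ∀ n : Fin N, partialSweep n = hyb A B n := fun _ => rfl
  have hstep : ∀ n : Fin N,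
      partialSweep (n + 1) = Function.update (hyb A B n) n (B n) := fun n => by
    funext i
    rcases eq_or_ne i n with rfl | hi
    · simp [partialSweep]
    · have : i.val < n + 1 ↔ i < n := by grind
      simp [partialSweep, hyb, this, hi]
  have hgain : ∀ n : Fin N,
      blockGain X A B n = fval X (partialSweep (n + 1)) - fval X (partialSweep n) := fun n => by
    have hold : hyb A B n n = A n := if_neg (lt_irrefl n)
    rw [hstep, hhyb, fval_update, fval_eq_froSq X (hyb A B n) n, hold, blockGain]
  simp only [hgain]
  rw [← Finset.sum_range fun j => fval X (partialSweep (j + 1)) - fval X (partialSweep j),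
    Finset.sum_range_sub (fun j => fval X (partialSweep j)), hfirst, hlast]

/-- `B` arises from `A` by one greedy HOOI sweep: every block of `B` is optimal given the blocks
already replaced, and is closest to the old block among the optimal ones. -/
structure IsGreedySweep (X : ((n : Fin N) → Fin (I n)) → ℝ) (A B : FactorTuple I r) : Prop where
  feasible : TFeas A
  isTopFrame : ∀ n, IsTopFrame (Gmat X (hyb A B n) n) (B n)
  nearest : ∀ n C, IsTopFrame (Gmat X (hyb A B n) n) C → fro (B n - A n) ≤ fro (C - A n)

lemma IsGreedyHOOI.isGreedySweep {X : ((n : Fin N) → Fin (I n)) → ℝ} {A : ℕ → FactorTuple I r}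
    (hA : IsGreedyHOOI X A) (k : ℕ) : IsGreedySweep X (A k) (A (k + 1)) where
  feasible := hA.1.1 k
  isTopFrame n := ⟨hA.1.1 (k + 1) n, hA.1.2 k n⟩
  nearest n C hC := hA.2 k n C hC.1 hC.2

namespace IsGreedySweep

variable {X : ((n : Fin N) → Fin (I n)) → ℝ} {A B : FactorTuple I r}

lemma blockGain_nonneg (h : IsGreedySweep X A B) (n : Fin N) : 0 ≤ blockGain X A B n :=
  sub_nonneg.2 ((h.isTopFrame n).2 (A n) (h.feasible n))

lemma blockGain_le (h : IsGreedySweep X A B) (n : Fin N) :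
    blockGain X A B n ≤ fval X B - fval X A :=
  (Finset.single_le_sum (fun i _ => h.blockGain_nonneg i) (Finset.mem_univ n)).trans_eq
    (sum_blockGain X A B)

lemma fval_le (h : IsGreedySweep X A B) : fval X A ≤ fval X B :=
  sub_nonneg.1 (sum_blockGain X A B ▸ Finset.sum_nonneg fun n _ => h.blockGain_nonneg n)

lemma spectralGap_mul_froSq_sub_le_blockGain (hr : ∀ n, r n ≤ I n) (h : IsGreedySweep X A B)
    (n : Fin N) :
    spectralGap (Gmat X (hyb A B n) n) (r n) / 2 * froSq (B n - A n) ≤ blockGain X A B n :=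
  (h.isTopFrame n).spectralGap_mul_froSq_sub_le (hr n) (h.feasible n) (h.nearest n)

end IsGreedySweep

section Convergence

variable {X : ((n : Fin N) → Fin (I n)) → ℝ} {β : Type*} {F : Filter β}
  {A B : β → FactorTuple I r} {Abar : FactorTuple I r}

lemma tendsto_hyb (hA : Tendsto A F (𝓝 Abar)) {n : Fin N}
    (hB : ∀ m < n, Tendsto (fun k => B k m) F (𝓝 (Abar m))) :
    Tendsto (fun k => hyb (A k) (B k) n) F (𝓝 Abar) := by
  refine tendsto_pi_nhds.2 fun m => ?_
  by_cases hm : m < n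
  · simpa only [hyb, if_pos hm] using hB m hm
  · simpa only [hyb, if_neg hm] using tendsto_pi_nhds.1 hA m

lemma eventually_mul_froSq_sub_le_blockGain (hr : ∀ n, r n ≤ I n)
    (hsweep : ∀ k, IsGreedySweep X (A k) (B k)) {n : Fin N}
    (hhyb : Tendsto (fun k => hyb (A k) (B k) n) F (𝓝 Abar)) {α : ℝ}
    (hα : α < spectralGap (Gmat X Abar n) (r n) / 2) :
    ∀ᶠ k in F, α * froSq (B k n - A k n) ≤ blockGain X (A k) (B k) n := by
  have hgap : Tendsto (fun k => spectralGap (Gmat X (hyb (A k) (B k) n) n) (r n) / 2) F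
      (𝓝 (spectralGap (Gmat X Abar n) (r n) / 2)) :=
    ((((continuous_spectralGap _).comp (continuous_Gmat X n)).tendsto Abar).comp hhyb).div_const 2
  filter_upwards [hgap.eventually_const_le hα] with k hk
  exact (mul_le_mul_of_nonneg_right hk (froSq_nonneg _)).trans
    ((hsweep k).spectralGap_mul_froSq_sub_le_blockGain hr n)

lemma tendsto_block_of_tendsto_hyb (hr : ∀ n, r n ≤ I n) (hnd : NonDeg X Abar)
    (hsweep : ∀ k, IsGreedySweep X (A k) (B k)) (hA : Tendsto A F (𝓝 Abar))
    (hgain : Tendsto (fun k => fval X (B k) - fval X (A k)) F (𝓝 0)) {n : Fin N}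
    (hhyb : Tendsto (fun k => hyb (A k) (B k) n) F (𝓝 Abar)) :
    Tendsto (fun k => B k n) F (𝓝 (Abar n)) := by
  obtain ⟨α, hα_pos, hα⟩ := exists_between (half_pos (spectralGap_pos_of_sval_lt (hnd n)))
  have hsq : Tendsto (fun k => froSq (B k n - A k n)) F (𝓝 0) := by
    refine squeeze_zero' (.of_forall fun _ => froSq_nonneg _) ?_
      (by simpa only [zero_div] using hgain.div_const α)
    filter_upwards [eventually_mul_froSq_sub_le_blockGain hr hsweep hhyb hα] with k hk
    rw [le_div_iff₀' hα_pos]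
    exact hk.trans ((hsweep k).blockGain_le n)
  have hstep : Tendsto (fun k => B k n - A k n) F (𝓝 0) :=
    tendsto_of_tendsto_fro_sub (by simpa [fro] using hsq.sqrt)
  simpa using hstep.add (tendsto_pi_nhds.1 hA n)

lemma tendsto_of_isGreedySweep (hr : ∀ n, r n ≤ I n) (hnd : NonDeg X Abar)
    (hsweep : ∀ k, IsGreedySweep X (A k) (B k)) (hA : Tendsto A F (𝓝 Abar))
    (hgain : Tendsto (fun k => fval X (B k) - fval X (A k)) F (𝓝 0)) :
    Tendsto B F (𝓝 Abar) := by
  refine tendsto_pi_nhds.2 fun n => ?_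
  induction n using WellFoundedLT.induction with
  | ind n ih => exact tendsto_block_of_tendsto_hyb hr hnd hsweep hA hgain (tendsto_hyb hA ih)

lemma exists_eventually_mul_sum_froSq_sub_le (hr : ∀ n, r n ≤ I n) (hnd : NonDeg X Abar)
    (hsweep : ∀ k, IsGreedySweep X (A k) (B k)) (hA : Tendsto A F (𝓝 Abar))
    (hgain : Tendsto (fun k => fval X (B k) - fval X (A k)) F (𝓝 0)) :
    ∃ α > 0, ∀ᶠ k in F, α * ∑ n, froSq (B k n - A k n) ≤ fval X (B k) - fval X (A k) := by
  obtain ⟨α, hα, hα_pos⟩ : ∃ α : ℝ, (∀ n, α < spectralGap (Gmat X Abar n) (r n) / 2) ∧ 0 < α :=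
    ((eventually_all.2 fun n => Ioo_mem_nhdsGT
      (half_pos (spectralGap_pos_of_sval_lt (hnd n)))).and self_mem_nhdsWithin).exists.imp
      fun α h => ⟨fun n => (h.1 n).2, h.2⟩
  have hB := tendsto_pi_nhds.1 (tendsto_of_isGreedySweep hr hnd hsweep hA hgain)
  refine ⟨α, hα_pos, ?_⟩
  filter_upwards [eventually_all.2 fun n => eventually_mul_froSq_sub_le_blockGain hr hsweep
    (tendsto_hyb hA fun m _ => hB m) (hα n)] with k hk
  rw [Finset.mul_sum, ← sum_blockGain]
  exact Finset.sum_le_sum fun n _ => hk n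

lemma tendsto_of_tendsto_tdist (h : Tendsto (fun k => tdist (A k) Abar) F (𝓝 0)) :
    Tendsto A F (𝓝 Abar) :=
  tendsto_pi_nhds.2 fun n => tendsto_of_tendsto_fro_sub <|
    squeeze_zero (fun _ => Real.sqrt_nonneg _) (fun k => Real.sqrt_le_sqrt <|
      Finset.single_le_sum (f := fun n => froSq (A k n - Abar n)) (fun _ _ => froSq_nonneg _)
        (Finset.mem_univ n)) h

end Convergence

section LimitPoint

variable {X : ((n : Fin N) → Fin (I n)) → ℝ} {A : ℕ → FactorTuple I r} {Abar : FactorTuple I r}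

lemma IsGreedyHOOI.fval_le_of_isLimitPt (hA : IsGreedyHOOI X A) (hlim : IsLimitPt A Abar)
    (k : ℕ) : fval X (A k) ≤ fval X Abar := by
  obtain ⟨φ, hφ, hconv⟩ := hlim
  have hmono : Monotone fun k => fval X (A k) :=
    monotone_nat_of_le_succ fun k => (hA.isGreedySweep k).fval_le
  have hsub : Tendsto (fun k => A (φ k)) atTop (𝓝 Abar) :=
    tendsto_pi_nhds.2 fun n => tendsto_of_tendsto_fro_sub (hconv n)
  have hval : Tendsto (fun k => fval X (A (φ k))) atTop (𝓝 (fval X Abar)) :=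
    ((continuous_fval X).tendsto Abar).comp hsub
  exact (hmono hφ.le_apply).trans ((hmono.comp hφ.monotone).ge_of_tendsto hval k)

lemma IsGreedyHOOI.tendsto_fval_succ_sub (hA : IsGreedyHOOI X A) (hlim : IsLimitPt A Abar)
    {F : Filter ℕ} (hF : Tendsto A F (𝓝 Abar)) :
    Tendsto (fun k => fval X (A (k + 1)) - fval X (A k)) F (𝓝 0) := by
  have hval : Tendsto (fun k => fval X Abar - fval X (A k)) F (𝓝 0) := by
    simpa using (((continuous_fval X).tendsto Abar).comp hF).const_sub (fval X Abar)
  exact squeeze_zero (fun k => sub_nonneg.2 (hA.isGreedySweep k).fval_le)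
    (fun k => sub_le_sub_right (hA.fval_le_of_isLimitPt hlim (k + 1)) _) hval

end LimitPoint

end Tensor

/-- Near a block-nondegenerate limit point of a greedy HOOI
sequence, the squared step length is bounded by the objective progress. -/
theorem stmt11 {N : ℕ} {I r : Fin N → ℕ} (hr : ∀ n, r n ≤ I n)
    (X : ((n : Fin N) → Fin (I n)) → ℝ)
    (A : ℕ → (n : Fin N) → Matrix (Fin (I n)) (Fin (r n)) ℝ)
    (hA : IsGreedyHOOI X A)
    (Abar : (n : Fin N) → Matrix (Fin (I n)) (Fin (r n)) ℝ)
    (hfeas : TFeas Abar) (hlim : IsLimitPt A Abar) (hnd : NonDeg X Abar) :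
    ∃ α > (0 : ℝ), ∃ δ > (0 : ℝ), ∀ k : ℕ, tdist (A k) Abar ≤ δ →
      α * (∑ n, froSq (A (k + 1) n - A k n)) ≤ fval X (A (k + 1)) - fval X (A k) := by
  let F : Filter ℕ := comap (fun k => tdist (A k) Abar) (𝓝 0)
  have hF : Tendsto A F (𝓝 Abar) := tendsto_of_tendsto_tdist tendsto_comap
  obtain ⟨α, hα, hevent⟩ := exists_eventually_mul_sum_froSq_sub_le hr hnd hA.isGreedySweep hF
    (hA.tendsto_fval_succ_sub hlim hF)
  obtain ⟨δ, hδ, hball⟩ := (Metric.nhds_basis_closedBall.comap _).eventually_iff.1 hevent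
  refine ⟨α, hα, δ, hδ, fun k hk => hball ?_⟩
  have htdist : 0 ≤ tdist (A k) Abar := Real.sqrt_nonneg _
  simpa [abs_of_nonneg htdist] using hk
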